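/- Let p > 3/2 and c > 0, and let (Δ_n)_{n≥1} be vectors in ℝ^d with ‖Δ_n‖₂ ≤ c·n^{−p} for all n ≥ 1. Define the probability distribution q on the positive integers by q(n) = n^{−(p+1/2)}/ζ(p+1/2), where ζ is the Riemann zeta function. Then the infinite-horizon single-sample randomized telescope estimator has finite expected compute ∑_{n=1}^∞ n·q(n) = ζ(p−1/2)/ζ(p+1/2) ≤ ζ(p−1/2)², and finite expected squared norm ∑_{n=1}^∞ ‖Δ_n‖₂²/q(n) ≤ c²·ζ(p+1/2)·ζ(p−1/2) ≤ c²·ζ(p−1/2)². -/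

import Mathlib

open Finset

/-!
Sampling `N` with probability `n ^ (-s) / ζ(s)` turns both moments of the estimator into values of
`ζ`: the cost `n` lowers the exponent `s` by one, giving `ζ(s - 1) / ζ(s)`, while dividing
`‖Δ n‖² ≤ c² n ^ (-2p)` by the probability leaves `c² ζ(s) n ^ (-(2p - s))`. The choice
`s = p + 1/2` equalises the two exponents `s - 1` and `2p - s`. The remaining comparisons hold
because `ζ` is antitone and at least `1` on `(1, ∞)`.
-/

/-- The zeta (Zipf) distribution of exponent `s`, as a mass function on the positive integers; it is
the sampling distribution of the estimator. For real `s > 1` the normalising constant `ζ(s)` is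
real, so it is encoded as the real part of the complex zeta function. -/
noncomputable def zetaMass (s : ℝ) (n : ℕ) : ℝ :=
  (n : ℝ) ^ (-s) / (riemannZeta s).re

section RealZeta

variable {s : ℝ}

lemma hasSum_nat_add_one_rpow_neg (hs : 1 < s) :
    HasSum (fun n : ℕ => ((n + 1 : ℕ) : ℝ) ^ (-s)) (riemannZeta s).re := by
  have summable : Summable (fun n : ℕ => ((n + 1 : ℕ) : ℝ) ^ (-s)) :=
    (summable_nat_add_iff 1).2 (Real.summable_nat_rpow.2 (neg_lt_neg hs))
  have zeta_eq : riemannZeta s = ((∑' n : ℕ, ((n + 1 : ℕ) : ℝ) ^ (-s) : ℝ) : ℂ) := by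
    rw [zeta_eq_tsum_one_div_nat_add_one_cpow (by simpa using hs), Complex.ofReal_tsum]
    refine tsum_congr fun n => ?_
    rw [Complex.ofReal_cpow n.succ.cast_nonneg, Complex.ofReal_neg, Complex.cpow_neg, one_div]
    norm_cast
  rw [zeta_eq, Complex.ofReal_re]
  exact summable.hasSum

lemma one_le_riemannZeta_re (hs : 1 < s) : 1 ≤ (riemannZeta s).re := by
  simpa using le_hasSum (hasSum_nat_add_one_rpow_neg hs) 0 fun n _ => by positivity

lemma antitoneOn_riemannZeta_re :
    AntitoneOn (fun s : ℝ => (riemannZeta s).re) (Set.Ioi 1) := fun _ hs _ ht hst =>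
  hasSum_le (fun n => Real.rpow_le_rpow_of_exponent_le (Nat.one_le_cast.2 n.succ_pos)
    (neg_le_neg hst)) (hasSum_nat_add_one_rpow_neg ht) (hasSum_nat_add_one_rpow_neg hs)

end RealZeta

section ZetaSampling

variable {s : ℝ}

lemma zetaMass_pos (hs : 1 < s) {n : ℕ} (hn : 0 < n) : 0 < zetaMass s n :=
  div_pos (Real.rpow_pos_of_pos (Nat.cast_pos.2 hn) _) (riemannZeta_re_pos_of_one_lt hs)

lemma hasSum_mul_zetaMass (hs : 2 < s) :
    HasSum (fun n : ℕ => ((n + 1 : ℕ) : ℝ) * zetaMass s (n + 1))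
      ((riemannZeta (s - 1 : ℝ)).re / (riemannZeta s).re) := by
  have hs' : 1 < s - 1 := by linarith
  refine ((hasSum_nat_add_one_rpow_neg hs').div_const _).congr_fun fun n => ?_
  rw [zetaMass, ← mul_div_assoc, neg_sub, sub_eq_add_neg,
    Real.rpow_one_add' n.succ.cast_nonneg (by linarith)]

variable {E : Type*} [SeminormedAddCommGroup E] {p c : ℝ}

lemma norm_sq_div_zetaMass_le (hs : 1 < s) {x : E} {n : ℕ} (hn : 0 < n)
    (hx : ‖x‖ ≤ c * (n : ℝ) ^ (-p)) :
    ‖x‖ ^ 2 / zetaMass s n ≤ c ^ 2 * (riemannZeta s).re * (n : ℝ) ^ (-(2 * p - s)) := by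
  have n_pos : (0 : ℝ) < n := Nat.cast_pos.2 hn
  have zeta_ne_zero := (riemannZeta_re_pos_of_one_lt hs).ne'
  rw [div_le_iff₀ (zetaMass_pos hs hn)]
  calc ‖x‖ ^ 2 ≤ (c * (n : ℝ) ^ (-p)) ^ 2 := by gcongr
    _ = c ^ 2 * ((n : ℝ) ^ (-(2 * p - s)) * (n : ℝ) ^ (-s)) := by
      rw [mul_pow, sq ((n : ℝ) ^ (-p)), ← Real.rpow_add n_pos, ← Real.rpow_add n_pos]
      ring_nf
    _ = c ^ 2 * (riemannZeta s).re * (n : ℝ) ^ (-(2 * p - s)) * zetaMass s n := by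
      rw [zetaMass]
      field_simp

lemma summable_norm_sq_div_zetaMass (hs : 1 < s) (hsp : s + 1 < 2 * p) {Δ : ℕ → E}
    (hΔ : ∀ n : ℕ, 1 ≤ n → ‖Δ n‖ ≤ c * (n : ℝ) ^ (-p)) :
    Summable (fun n : ℕ => ‖Δ (n + 1)‖ ^ 2 / zetaMass s (n + 1)) :=
  .of_nonneg_of_le (fun n => div_nonneg (sq_nonneg _) (zetaMass_pos hs n.succ_pos).le)
    (fun n => norm_sq_div_zetaMass_le hs n.succ_pos (hΔ (n + 1) n.succ_pos))
    ((hasSum_nat_add_one_rpow_neg (lt_sub_iff_add_lt'.2 hsp)).summable.mul_left _)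

lemma tsum_norm_sq_div_zetaMass_le (hs : 1 < s) (hsp : s + 1 < 2 * p) {Δ : ℕ → E}
    (hΔ : ∀ n : ℕ, 1 ≤ n → ‖Δ n‖ ≤ c * (n : ℝ) ^ (-p)) :
    ∑' n : ℕ, ‖Δ (n + 1)‖ ^ 2 / zetaMass s (n + 1)
      ≤ c ^ 2 * (riemannZeta s).re * (riemannZeta (2 * p - s : ℝ)).re :=
  hasSum_le (fun n => norm_sq_div_zetaMass_le hs n.succ_pos (hΔ (n + 1) n.succ_pos))
    (summable_norm_sq_div_zetaMass hs hsp hΔ).hasSum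
    ((hasSum_nat_add_one_rpow_neg (lt_sub_iff_add_lt'.2 hsp)).mul_left _)

end ZetaSampling

theorem rtss_poly_infinite_horizon_general {E : Type*} [SeminormedAddCommGroup E]
    (p s c : ℝ) (hs : 2 < s) (hps : p ≤ s) (hsp : s + 1 < 2 * p) (Δ : ℕ → E)
    (hΔ : ∀ n : ℕ, 1 ≤ n → ‖Δ n‖ ≤ c * (n : ℝ) ^ (-p)) :
    Summable (fun n : ℕ => ((n + 1 : ℕ) : ℝ) * zetaMass s (n + 1)) ∧
    (∑' n : ℕ, ((n + 1 : ℕ) : ℝ) * zetaMass s (n + 1))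
      = (riemannZeta (s - 1 : ℝ)).re / (riemannZeta s).re ∧
    (riemannZeta (s - 1 : ℝ)).re / (riemannZeta s).re ≤ (riemannZeta (s - 1 : ℝ)).re ^ 2 ∧
    Summable (fun n : ℕ => ‖Δ (n + 1)‖ ^ 2 / zetaMass s (n + 1)) ∧
    (∑' n : ℕ, ‖Δ (n + 1)‖ ^ 2 / zetaMass s (n + 1))
      ≤ c ^ 2 * (riemannZeta s).re * (riemannZeta (2 * p - s : ℝ)).re ∧
    c ^ 2 * (riemannZeta s).re * (riemannZeta (2 * p - s : ℝ)).re
      ≤ c ^ 2 * (riemannZeta (2 * p - s : ℝ)).re ^ 2 := by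
  have hs₁ : 1 < s := by linarith
  have hcost : 1 < s - 1 := by linarith
  have hnorm : 1 < 2 * p - s := by linarith
  have zeta_le : (riemannZeta s).re ≤ (riemannZeta (2 * p - s : ℝ)).re :=
    antitoneOn_riemannZeta_re hnorm hs₁ (by linarith)
  refine ⟨(hasSum_mul_zetaMass hs).summable, (hasSum_mul_zetaMass hs).tsum_eq, ?_,
    summable_norm_sq_div_zetaMass hs₁ hsp hΔ, tsum_norm_sq_div_zetaMass_le hs₁ hsp hΔ, ?_⟩
  · exact (div_le_self (riemannZeta_re_pos_of_one_lt hcost).le (one_le_riemannZeta_re hs₁)).trans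
      (le_self_pow₀ (one_le_riemannZeta_re hcost) two_ne_zero)
  · rw [mul_assoc, sq (riemannZeta _).re]
    have := (riemannZeta_re_pos_of_one_lt hnorm).le
    gcongr

/-- **Horizon-agnostic compute and squared-norm bounds for RT-SS with polynomial sampling
(infinite-horizon version of Theorem 1).** For `p > 3/2`, `‖Δ_n‖ ≤ c n^{-p}`, and
`q(n) = n^{-(p+1/2)}/ζ(p+1/2)`, the expected compute equals `ζ(p-1/2)/ζ(p+1/2) ≤ ζ(p-1/2)²`
and the expected squared norm is at most `c² ζ(p+1/2) ζ(p-1/2) ≤ c² ζ(p-1/2)²`. -/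
theorem rtss_poly_infinite_horizon {d : ℕ} (hd : 0 < d)
    (p c : ℝ) (hp : 3 / 2 < p) (hc : 0 < c)
    (Δ : ℕ → EuclideanSpace ℝ (Fin d))
    (hΔ : ∀ n : ℕ, 1 ≤ n → ‖Δ n‖ ≤ c * (n : ℝ) ^ (-p))
    (q : ℕ → ℝ)
    (hq : ∀ n : ℕ, 1 ≤ n →
      q n = (n : ℝ) ^ (-(p + 1 / 2)) / (riemannZeta ((p : ℂ) + 1 / 2)).re) :
    Summable (fun n : ℕ => ((n + 1 : ℕ) : ℝ) * q (n + 1)) ∧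
    (∑' n : ℕ, ((n + 1 : ℕ) : ℝ) * q (n + 1))
      = (riemannZeta ((p : ℂ) - 1 / 2)).re / (riemannZeta ((p : ℂ) + 1 / 2)).re ∧
    (riemannZeta ((p : ℂ) - 1 / 2)).re / (riemannZeta ((p : ℂ) + 1 / 2)).re
      ≤ (riemannZeta ((p : ℂ) - 1 / 2)).re ^ 2 ∧
    Summable (fun n : ℕ => ‖Δ (n + 1)‖ ^ 2 / q (n + 1)) ∧
    (∑' n : ℕ, ‖Δ (n + 1)‖ ^ 2 / q (n + 1))
      ≤ c ^ 2 * (riemannZeta ((p : ℂ) + 1 / 2)).re * (riemannZeta ((p : ℂ) - 1 / 2)).re ∧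
    c ^ 2 * (riemannZeta ((p : ℂ) + 1 / 2)).re * (riemannZeta ((p : ℂ) - 1 / 2)).re
      ≤ c ^ 2 * (riemannZeta ((p : ℂ) - 1 / 2)).re ^ 2 := by
  have hcost : p + 1 / 2 - 1 = p - 1 / 2 := by ring
  have hnorm : 2 * p - (p + 1 / 2) = p - 1 / 2 := by ring
  have q_succ (n : ℕ) : q (n + 1) = zetaMass (p + 1 / 2) (n + 1) := by
    simpa [zetaMass] using hq (n + 1) n.succ_pos
  simpa only [q_succ, hcost, hnorm, Complex.ofReal_add, Complex.ofReal_sub, Complex.ofReal_div,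
    Complex.ofReal_one, Complex.ofReal_ofNat] using
    rtss_poly_infinite_horizon_general p (p + 1 / 2) c
      (by linarith) (by linarith) (by linarith) Δ hΔ
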